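/- If H is a skew shape ν ⊆ λ (i.e. H = λ/ν) which is a rim hook of length kt, where k,t ≥ 1, then there exists a skew rim hook tableau of shape H consisting of t rim hooks of length k each; that is, there is a chain ν = ν^0 ⊆ ν^1 ⊆ … ⊆ ν^t = λ of partitions such that each ν^i/ν^{i−1} is a rim hook of length k. -/

import Mathlib

open scoped BigOperators

namespace RimHookPaper

/-- A partition: a weakly decreasing, eventually-zero sequence of naturals;
`parts n` is the `(n+1)`-st part. -/
structure Partition : Type where
  parts : ℕ → ℕ
  antitone : ∀ ⦃i j : ℕ⦄, i ≤ j → parts j ≤ parts i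
  eventually_zero : ∃ N : ℕ, ∀ i : ℕ, N ≤ i → parts i = 0

namespace Partition

/-- The size `|λ|` of a partition. -/
noncomputable def size (P : Partition) : ℕ := ∑ᶠ i, P.parts i

/-- The empty partition. -/
def empty : Partition := ⟨fun _ => 0, fun _ _ _ => le_rfl, ⟨0, fun _ _ => rfl⟩⟩

/-- The number of nonzero parts of a partition. -/
noncomputable def length (P : Partition) : ℕ := sInf {N | P.parts N = 0}

/-- The cells of the Young diagram of a partition. -/
def cells (P : Partition) : Set (ℕ × ℕ) := {c | c.2 < P.parts c.1}

instance : LE Partition := ⟨fun Q P => ∀ i, Q.parts i ≤ P.parts i⟩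

/-- The skew shape `P / Q` (as a set of cells). -/
def skew (P Q : Partition) : Set (ℕ × ℕ) := P.cells \ Q.cells

end Partition

/-- Edge-adjacency of cells. -/
def Adj (c d : ℕ × ℕ) : Prop :=
  (c.1 = d.1 ∧ (c.2 + 1 = d.2 ∨ d.2 + 1 = c.2)) ∨
    (c.2 = d.2 ∧ (c.1 + 1 = d.1 ∨ d.1 + 1 = c.1))

/-- A set of cells is (edge-)connected. -/
def IsConnectedSet (S : Set (ℕ × ℕ)) : Prop :=
  ∀ c ∈ S, ∀ d ∈ S, Relation.ReflTransGen (fun x y => x ∈ S ∧ y ∈ S ∧ Adj x y) c d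

/-- `S` contains no 2×2 square. -/
def NoSquare (S : Set (ℕ × ℕ)) : Prop :=
  ¬ ∃ i j : ℕ, (i, j) ∈ S ∧ (i + 1, j) ∈ S ∧ (i, j + 1) ∈ S ∧ (i + 1, j + 1) ∈ S

/-- `P / Q` is a rim hook (border strip) of length `t`: a nonempty connected skew
shape with no 2×2 square, consisting of `t` boxes. -/
def IsRimHook (P Q : Partition) (t : ℕ) : Prop :=
  Q ≤ P ∧ (P.skew Q).Nonempty ∧ IsConnectedSet (P.skew Q) ∧ NoSquare (P.skew Q) ∧
    (P.skew Q).ncard = t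

/-- One step of a rim hook tableau: an empty hook (`t = 0`) or a rim hook of length `t`. -/
def IsStep (P Q : Partition) (t : ℕ) : Prop :=
  (t = 0 ∧ P = Q) ∨ (0 < t ∧ IsRimHook P Q t)

/-- Number of rows met by a set of cells. -/
noncomputable def rowCount (S : Set (ℕ × ℕ)) : ℕ := (Prod.fst '' S).ncard

/-- A rim hook tableau of shape `P` and type `μ`: a chain
`∅ = λ⁰ ⊆ λ¹ ⊆ ⋯ ⊆ λʳ = P` with each `λⁱ/λⁱ⁻¹` a (possibly empty)
rim hook of length `μᵢ`. -/
structure RHT (P : Partition) (μ : List ℕ) : Type where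
  chain : Fin (μ.length + 1) → Partition
  chain_zero : chain 0 = Partition.empty
  chain_last : chain (Fin.last μ.length) = P
  step : ∀ j : Fin μ.length, IsStep (chain j.succ) (chain j.castSucc) (μ.get j)

/-- The total height of a rim hook tableau: the sum of the heights
(number of rows minus one) of its nonempty rim hooks. -/
noncomputable def RHT.height {P : Partition} {μ : List ℕ} (T : RHT P μ) : ℕ :=
  ∑ j : Fin μ.length, (rowCount ((T.chain j.succ).skew (T.chain j.castSucc)) - 1)

/-- The character value `χ^λ_μ` of the symmetric group, via the
Murnaghan–Nakayama rule. -/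
noncomputable def chiAux (P : Partition) (μ : List ℕ) : ℤ :=
  ∑ᶠ T : RHT P μ, (-1 : ℤ) ^ T.height

/-- The parts of a multiset, listed in weakly decreasing order. -/
def typeList (μ : Multiset ℕ) : List ℕ := (μ.sort (· ≤ ·)).reverse

/-- `χ^λ_μ` for a multiset type `μ`. -/
noncomputable def chi (P : Partition) (μ : Multiset ℕ) : ℤ := chiAux P (typeList μ)

/-- `z_μ = ∏_j m_j! · j^{m_j}` where `μ` has `m_j` parts equal to `j`. -/
def zpart (μ : Multiset ℕ) : ℕ := μ.prod * ∏ j ∈ μ.toFinset, (μ.count j).factorial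

/-- `χ^λ(σ)`: the character evaluated at a permutation, via its full cycle type
(including fixed points as parts equal to 1). -/
noncomputable def chiPerm (P : Partition) {m : ℕ} (σ : Equiv.Perm (Fin m)) : ℤ :=
  chi P (σ.cycleType + Multiset.replicate (m - σ.cycleType.sum) 1)

/-- Position of the zero (up step) corresponding to row `n` in the 0/1 sequence
`s(P)`, where the median of `s(P)` is the gap just below position `0`. -/
def zpos (P : Partition) (n : ℕ) : ℤ := (P.parts n : ℤ) - (n : ℤ) - 1

/-- `s(P)` has a `0` (an up step) at position `x`; otherwise it has a `1`. -/
def isZeroAt (P : Partition) (x : ℤ) : Prop := ∃ n : ℕ, zpos P n = x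

/-- `Q` is the `k`-quotient of `P`: for each residue `i`, the 0/1 sequence of `Q i`
is (up to the shift `d` recording the position of its median) the subsequence of
`s(P)` consisting of every `k`-th digit, including the `(i+1)`-st digit after the
median of `s(P)`. -/
def IsKQuotient (k : ℕ) (P : Partition) (Q : Fin k → Partition) : Prop :=
  ∀ i : Fin k, ∃ d : ℤ, ∀ j : ℤ,
    isZeroAt (Q i) j ↔ isZeroAt P (((i : ℕ) : ℤ) + (j + d) * (k : ℤ))

/-- `C` is the `k`-core of `P`: it is obtained from `P` by successively removing
rim hooks of length `k`, as long as possible. -/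
def IsKCore (k : ℕ) (P C : Partition) : Prop :=
  Relation.ReflTransGen (fun A B => IsRimHook A B k) P C ∧ ¬ ∃ C', IsRimHook C C' k

/-- The map on row indices induced by moving the zero in row `m` down (left)
to row `m'`, the zeros in rows `m+1,…,m'` each moving up one row. -/
def cycleFun (m m' n : ℕ) : ℕ :=
  if n = m then m' else if m < n ∧ n ≤ m' then n - 1 else n

/-- One tracking step for the zero permutation: passing from `A` to `B` by removing
a rim hook, encoded on the 0/1 sequence as interchanging a `1` with a later `0`
(the moved zero, in row `m` of `A`, jumps over `m' - m` zeros, landing in row `m'`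
of `B`); the row of each labeled zero is updated by `cycleFun m m'`. -/
def StepTrack (A B : Partition) (f g : ℕ → ℕ) : Prop :=
  (A = B ∧ g = f) ∨
    ∃ m m' : ℕ, m ≤ m' ∧
      (∀ n, n < m → zpos B n = zpos A n) ∧
      (∀ n, m ≤ n → n < m' → zpos B n = zpos A (n + 1)) ∧
      (∀ n, m' < n → zpos B n = zpos A n) ∧
      g = fun i => cycleFun m m' (f i)

/-- `π` is the zero permutation of the rim hook tableau `T`: label the zeros of
`s(P)` succeeding the first one by `1,…,ℓ(P)` from left to right (`q j i` is the
row of label `i+1` at stage `j` of the peeling, rows counted from the top), peel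
the rim hooks of `T` in order of decreasing entries, and read off the labels in
the final sequence `s(∅)` from left to right. -/
def IsZeroPerm {P : Partition} {μ : List ℕ} (T : RHT P μ)
    (π : Equiv.Perm (Fin P.length)) : Prop :=
  ∃ q : Fin (μ.length + 1) → ℕ → ℕ,
    (∀ i : ℕ, i < P.length → q (Fin.last μ.length) i = P.length - 1 - i) ∧
    (∀ j : Fin μ.length,
      StepTrack (T.chain j.succ) (T.chain j.castSucc) (q j.succ) (q j.castSucc)) ∧
    (∀ i : Fin P.length, q 0 ((π i : ℕ)) = P.length - 1 - (i : ℕ))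

/-- `ω(T) = (T₁,…,T_k)`: the rim hook tableau `T` (all of whose hook lengths are
divisible by `k`) decomposes into the `k`-tuple of rim hook tableaux `Ti` on the
`k`-quotient: each step of `T`, removing a hook of length `k·t`, affects exactly
one subsequence (mod `k`) of the 0/1 sequence, i.e. removes a hook of length `t`
from exactly one of the quotient partitions. -/
def OmegaRel (k : ℕ) {P : Partition} {κ : List ℕ} (T : RHT P κ)
    {Q : Fin k → Partition} {ν : Fin k → List ℕ}
    (Ti : ∀ i : Fin k, RHT (Q i) (ν i)) : Prop :=
  ∃ (QC : Fin (κ.length + 1) → Fin k → Partition) (a : Fin κ.length → Fin k),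
    (∀ j, IsKQuotient k (T.chain j) (QC j)) ∧
    (∀ j : Fin κ.length, ∀ i, i ≠ a j → QC j.castSucc i = QC j.succ i) ∧
    (∀ j : Fin κ.length, ∃ t : ℕ, κ.get j = k * t ∧
      IsStep (QC j.succ (a j)) (QC j.castSucc (a j)) t) ∧
    (∀ i : Fin k, ∃ e : Fin (ν i).length → Fin κ.length,
      StrictMono e ∧ (∀ s, a (e s) = i) ∧ (∀ j, a j = i → ∃ s, e s = j) ∧
      (∀ s, k * (ν i).get s = κ.get (e s)) ∧
      (Ti i).chain 0 = QC 0 i ∧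
      (∀ s : Fin (ν i).length, (Ti i).chain s.succ = QC (Fin.succ (e s)) i))

/-!
Record `P` by the set of positions of the zeros of its 0/1 sequence. Removing a rim hook of
length `n` replaces one zero `x` by `x - n`, where `x - n` was not yet a zero: along a rim hook the
content `j - i` takes each value of an interval exactly once, and the rows cut this interval at the
zeros. A move `x → x - (a + b)` is therefore two moves: through `x - a` if that position carries
no zero, and otherwise first `x - a → x - (a + b)`, then `x → x - a`. Taking `a = k` detaches one
`k`-hook from the top or the bottom, and induction on the number of hooks finishes.
-/

section Zeros

/-- The positions of the zeros of the 0/1 sequence `s(P)`, as a set of integers. It determines `P`,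
and rim hook removal is the displacement of one of its elements. -/
def zeroSet (P : Partition) : Set ℤ := {x | isZeroAt P x}

lemma zpos_mem_zeroSet (P : Partition) (i : ℕ) : zpos P i ∈ zeroSet P := ⟨i, rfl⟩

lemma zpos_strictAnti (P : Partition) : StrictAnti (zpos P) := by
  intro i j hij
  have := P.antitone hij.le
  unfold zpos
  omega

lemma zpos_injective : Function.Injective zpos := by
  rintro ⟨p, _, _⟩ ⟨q, _, _⟩ h
  obtain rfl : p = q := funext fun i => by
    have hi := congrFun h i
    simp only [zpos] at hi
    omega
  rfl

lemma zeroSet_injective : Function.Injective zeroSet := fun P Q h =>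
  zpos_injective <| OrderDual.toDual.injective.comp_left <|
    ((zpos_strictAnti P).dual_right.range_inj (zpos_strictAnti Q).dual_right).1 h

-- In an empty row `i` the zero sits at `-i - 1`, which explains the normalization `hN`.
lemma exists_zpos_eq_of_strictAnti {f : ℕ → ℤ} (hf : StrictAnti f) {N : ℕ}
    (hN : ∀ i, N ≤ i → f i = -(i : ℤ) - 1) : ∃ Q : Partition, zpos Q = f := by
  have hanti : Antitone fun i => f i + i + 1 := antitone_nat_of_succ_le fun i => by
    have := hf i.lt_add_one
    push_cast
    omega
  have hnonneg : ∀ i, 0 ≤ f i + i + 1 := fun i => by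
    have hle := hanti (le_max_left i N)
    have hzero := hN _ (le_max_right i N)
    simp only [hzero] at hle
    omega
  refine ⟨⟨fun i => (f i + i + 1).toNat, fun i j hij => Int.toNat_le_toNat (hanti hij), N,
    fun i hi => by have := hN i hi; omega⟩, funext fun i => ?_⟩
  have := hnonneg i
  simp only [zpos]
  omega

end Zeros

section MovesZero

/-- `MovesZero P Q r s` says that `s(Q)` arises from `s(P)` by moving the zero of row `r` left, so
that it becomes the zero of row `s`; the zeros of rows `r + 1, …, s` each move up one row. This is
the row-by-row form of a displacement in `zeroSet P`; unlike `StepTrack`, it asks that the zero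
really moves to the left. -/
structure MovesZero (P Q : Partition) (r s : ℕ) : Prop where
  le : r ≤ s
  zpos_of_lt : ∀ i < r, zpos Q i = zpos P i
  zpos_of_ge_of_lt : ∀ i, r ≤ i → i < s → zpos Q i = zpos P (i + 1)
  zpos_of_gt : ∀ i > s, zpos Q i = zpos P i
  zpos_lt : zpos Q s < zpos P r

variable {P Q : Partition} {r s : ℕ}

lemma MovesZero.zeroSet_eq (h : MovesZero P Q r s) :
    zeroSet Q = insert (zpos Q s) (zeroSet P \ {zpos P r}) := by
  have hne {i : ℕ} (hi : i ≠ r) : zpos P i ≠ zpos P r := (zpos_strictAnti P).injective.ne hi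
  ext z
  simp only [Set.mem_insert_iff, Set.mem_sdiff, Set.mem_singleton_iff]
  constructor
  · rintro ⟨i, rfl⟩
    rcases lt_or_ge i r with hir | hri
    · rw [h.zpos_of_lt i hir]
      exact .inr ⟨zpos_mem_zeroSet P i, hne hir.ne⟩
    rcases lt_trichotomy i s with his | rfl | hsi
    · rw [h.zpos_of_ge_of_lt i hri his]
      exact .inr ⟨zpos_mem_zeroSet P (i + 1), hne (by omega)⟩
    · exact .inl rfl
    · rw [h.zpos_of_gt i hsi]
      exact .inr ⟨zpos_mem_zeroSet P i, hne (by have := h.le; omega)⟩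
  · rintro (rfl | ⟨⟨i, rfl⟩, hir⟩)
    · exact zpos_mem_zeroSet Q s
    rcases lt_trichotomy i r with hir | rfl | hri
    · exact ⟨i, h.zpos_of_lt i hir⟩
    · exact absurd rfl hir
    rcases le_or_gt i s with his | hsi
    · obtain ⟨i, rfl⟩ := Nat.exists_eq_succ_of_ne_zero (Nat.ne_zero_of_lt hri)
      exact ⟨i, h.zpos_of_ge_of_lt i (by omega) (by omega)⟩
    · exact ⟨i, h.zpos_of_gt i hsi⟩

lemma MovesZero.zpos_notMem (h : MovesZero P Q r s) : zpos Q s ∉ zeroSet P := by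
  rintro ⟨i, hi⟩
  rcases le_or_gt i r with hir | hri
  · have := (zpos_strictAnti P).antitone hir
    have := h.zpos_lt
    omega
  rcases le_or_gt i s with his | hsi
  · obtain ⟨i, rfl⟩ := Nat.exists_eq_succ_of_ne_zero (Nat.ne_zero_of_lt hri)
    have := h.zpos_of_ge_of_lt i (by omega) (by omega)
    have := zpos_strictAnti Q (show i < s by omega)
    simp only [Nat.succ_eq_add_one] at hi
    omega
  · have := h.zpos_of_gt i hsi
    have := zpos_strictAnti Q hsi
    omega

lemma exists_zpos_lt_le_zpos {y : ℤ} (hlt : y < zpos P r) :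
    ∃ s, r ≤ s ∧ y < zpos P s ∧ zpos P (s + 1) ≤ y := by
  have hex : ∃ j, zpos P (r + j) ≤ y := by
    refine ⟨(zpos P r - y).toNat, ?_⟩
    have hanti := P.antitone (Nat.le_add_right r (zpos P r - y).toNat)
    simp only [zpos] at hanti ⊢
    omega
  obtain ⟨j, hj⟩ := Nat.exists_eq_succ_of_ne_zero fun h : Nat.find hex = 0 =>
    ((Nat.find_eq_zero hex).1 h).not_gt hlt
  refine ⟨r + j, Nat.le_add_right r j, not_le.1 (Nat.find_min hex (by omega)), ?_⟩
  simpa only [hj, Nat.succ_eq_add_one, ← add_assoc] using Nat.find_spec hex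

lemma exists_movesZero {y : ℤ} (hy : y ∉ zeroSet P) (hlt : y < zpos P r) :
    ∃ Q s, MovesZero P Q r s ∧ zpos Q s = y := by
  obtain ⟨s, hrs, hys, hsy⟩ := exists_zpos_lt_le_zpos hlt
  replace hsy : zpos P (s + 1) < y := hsy.lt_of_ne fun h => hy ⟨s + 1, h⟩
  obtain ⟨N, hN⟩ := P.eventually_zero
  obtain ⟨Q, hQ⟩ : ∃ Q : Partition, zpos Q = fun i =>
      if i < r then zpos P i else if i < s then zpos P (i + 1)
      else if i = s then y else zpos P i := by
    refine exists_zpos_eq_of_strictAnti (N := N + s + 1)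
      (strictAnti_nat_of_succ_lt fun i => ?_) fun i hi => ?_
    · have := zpos_strictAnti P i.lt_add_one
      have := zpos_strictAnti P (i + 1).lt_add_one
      grind
    · grind [zpos]
  exact ⟨Q, s, ⟨hrs, by grind, by grind, by grind, by grind⟩, by grind⟩

end MovesZero

section Content

/-- The content `j - i` of a cell `(i, j)`, which numbers the diagonals. -/
def content (c : ℕ × ℕ) : ℤ := c.2 - c.1

variable {P Q : Partition} {r s : ℕ}

lemma mem_skew_iff_content {c : ℕ × ℕ} :
    c ∈ P.skew Q ↔ content c ∈ Set.Ioc (zpos Q c.1) (zpos P c.1) := by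
  simp only [Partition.skew, Partition.cells, Set.mem_sdiff, Set.mem_ofPred_eq, content, zpos,
    Set.mem_Ioc]
  omega

lemma mk_mem_skew_iff {i j : ℕ} : (i, j) ∈ P.skew Q ↔ Q.parts i ≤ j ∧ j < P.parts i := by
  simp only [Partition.skew, Partition.cells, Set.mem_sdiff, Set.mem_ofPred_eq, not_lt]
  exact and_comm

lemma noSquare_of_injOn_content {S : Set (ℕ × ℕ)} (h : S.InjOn content) : NoSquare S := by
  rintro ⟨i, j, hij, -, -, hij'⟩
  simpa using h hij hij' (by simp [content])

lemma isConnectedSet_of_forall_reflTransGen {S : Set (ℕ × ℕ)} {e : ℕ × ℕ}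
    (h : ∀ c ∈ S, Relation.ReflTransGen (fun x y => x ∈ S ∧ y ∈ S ∧ Adj x y) c e) :
    IsConnectedSet S := by
  have : Std.Symm fun x y => x ∈ S ∧ y ∈ S ∧ Adj x y := by
    refine ⟨fun x y ⟨hx, hy, hxy⟩ => ⟨hy, hx, ?_⟩⟩
    simp only [Adj] at hxy ⊢
    omega
  exact fun c hc d hd => (h c hc).trans (Relation.ReflTransGen.stdSymm.symm _ _ (h d hd))

namespace MovesZero

lemma mem_Icc_of_mem_skew (h : MovesZero P Q r s) {c : ℕ × ℕ} (hc : c ∈ P.skew Q) :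
    c.1 ∈ Set.Icc r s := by
  have hlt : zpos Q c.1 < zpos P c.1 := (mem_skew_iff_content.1 hc).1.trans_le
    (mem_skew_iff_content.1 hc).2
  refine ⟨not_lt.1 fun hr => ?_, not_lt.1 fun hs => ?_⟩
  · exact hlt.ne (h.zpos_of_lt _ hr)
  · exact hlt.ne (h.zpos_of_gt _ hs)

lemma zpos_lt_zpos (h : MovesZero P Q r s) {i : ℕ} (hi : i ∈ Set.Icc r s) :
    zpos Q i < zpos P i := by
  rcases hi.2.lt_or_eq with his | rfl
  · rw [h.zpos_of_ge_of_lt i hi.1 his]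
    exact zpos_strictAnti P i.lt_add_one
  rcases hi.1.lt_or_eq with hri | rfl
  · obtain ⟨i, rfl⟩ := Nat.exists_eq_succ_of_ne_zero (Nat.ne_zero_of_lt hri)
    rw [← h.zpos_of_ge_of_lt i (by omega) i.lt_add_one]
    exact zpos_strictAnti Q i.lt_add_one
  · exact h.zpos_lt

lemma partition_le (h : MovesZero P Q r s) : Q ≤ P := by
  intro i
  have hle : zpos Q i ≤ zpos P i := by
    rcases lt_or_ge i r with hir | hri
    · exact (h.zpos_of_lt i hir).le
    rcases le_or_gt i s with his | hsi
    · exact (h.zpos_lt_zpos ⟨hri, his⟩).le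
    · exact (h.zpos_of_gt i hsi).le
  simp only [zpos] at hle
  omega

lemma mapsTo_content (h : MovesZero P Q r s) :
    Set.MapsTo content (P.skew Q) (Set.Ioc (zpos Q s) (zpos P r)) := fun _ hc =>
  have hrow := h.mem_Icc_of_mem_skew hc
  have hcontent := mem_skew_iff_content.1 hc
  ⟨((zpos_strictAnti Q).antitone hrow.2).trans_lt hcontent.1,
    hcontent.2.trans ((zpos_strictAnti P).antitone hrow.1)⟩

lemma content_lt_content (h : MovesZero P Q r s) {c d : ℕ × ℕ} (hc : c ∈ P.skew Q)
    (hd : d ∈ P.skew Q) (hcd : c.1 < d.1) : content d < content c :=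
  calc content d ≤ zpos P d.1 := (mem_skew_iff_content.1 hd).2
    _ ≤ zpos P (c.1 + 1) := (zpos_strictAnti P).antitone hcd
    _ = zpos Q c.1 := (h.zpos_of_ge_of_lt c.1 (h.mem_Icc_of_mem_skew hc).1
      (hcd.trans_le (h.mem_Icc_of_mem_skew hd).2)).symm
    _ < content c := (mem_skew_iff_content.1 hc).1

lemma injOn_content (h : MovesZero P Q r s) : Set.InjOn content (P.skew Q) := by
  intro c hc d hd hcd
  have hrow : c.1 = d.1 := by
    rcases lt_trichotomy c.1 d.1 with hlt | heq | hgt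
    · exact absurd hcd (h.content_lt_content hc hd hlt).ne'
    · exact heq
    · exact absurd hcd (h.content_lt_content hd hc hgt).ne
  refine Prod.ext hrow ?_
  simp only [content] at hcd
  omega

lemma exists_adj_content_eq_sub_one (h : MovesZero P Q r s) {c : ℕ × ℕ} (hc : c ∈ P.skew Q)
    (hlt : zpos Q s + 1 < content c) :
    ∃ d ∈ P.skew Q, Adj c d ∧ content d = content c - 1 := by
  obtain ⟨i, j⟩ := c
  obtain ⟨hri, his⟩ : r ≤ i ∧ i ≤ s := h.mem_Icc_of_mem_skew hc
  rw [mk_mem_skew_iff] at hc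
  by_cases hj : Q.parts i < j
  · refine ⟨(i, j - 1), mk_mem_skew_iff.2 (by omega), .inl ⟨rfl, .inr ?_⟩, ?_⟩
    · exact Nat.sub_add_cancel (by omega)
    · simp only [content]
      omega
  · obtain rfl : j = Q.parts i := by omega
    have his : i < s := his.lt_of_ne fun heq => by
      simp only [content, zpos, heq] at hlt
      omega
    have hstep := h.zpos_of_ge_of_lt i hri his
    have hanti := Q.antitone i.le_succ
    refine ⟨(i + 1, Q.parts i), mk_mem_skew_iff.2 ⟨hanti, ?_⟩, .inr ⟨rfl, .inl rfl⟩, ?_⟩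
    · simp only [zpos] at hstep
      omega
    · simp only [content]
      omega

lemma surjOn_content (h : MovesZero P Q r s) :
    Set.SurjOn content (P.skew Q) (Set.Ioc (zpos Q s) (zpos P r)) := by
  rintro z ⟨hsz, hzr⟩
  induction z, hzr using Int.leInductionDown with
  | base =>
    have hlt := h.zpos_lt_zpos ⟨le_rfl, h.le⟩
    simp only [zpos] at hlt
    refine ⟨(r, P.parts r - 1), mk_mem_skew_iff.2 (by omega), ?_⟩
    simp only [content, zpos]
    omega
  | pred z _ ih =>
    obtain ⟨c, hc, rfl⟩ := ih (by omega)
    obtain ⟨d, hd, -, hdc⟩ := h.exists_adj_content_eq_sub_one hc (by omega)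
    exact ⟨d, hd, hdc⟩

lemma bijOn_content (h : MovesZero P Q r s) :
    Set.BijOn content (P.skew Q) (Set.Ioc (zpos Q s) (zpos P r)) :=
  ⟨h.mapsTo_content, h.injOn_content, h.surjOn_content⟩

lemma ncard_skew (h : MovesZero P Q r s) :
    ((P.skew Q).ncard : ℤ) = zpos P r - zpos Q s := by
  rw [h.bijOn_content.ncard_eq, ← Finset.coe_Ioc, Set.ncard_coe_finset, Int.card_Ioc,
    Int.toNat_of_nonneg (sub_nonneg.2 h.zpos_lt.le)]

lemma isConnectedSet_skew (h : MovesZero P Q r s) : IsConnectedSet (P.skew Q) := by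
  obtain ⟨e, he, hes⟩ := h.surjOn_content ⟨lt_add_one (zpos Q s), h.zpos_lt⟩
  refine isConnectedSet_of_forall_reflTransGen (e := e) fun c hc => ?_
  obtain ⟨m, hm⟩ := Int.le.dest (h.mapsTo_content hc).1
  induction m generalizing c with
  | zero =>
    rw [h.injOn_content hc he (by grind)]
  | succ m ih =>
    obtain ⟨d, hd, hcd, hdc⟩ := h.exists_adj_content_eq_sub_one hc (by omega)
    exact .head ⟨hc, hd, hcd⟩ (ih d hd (by omega))

lemma isRimHook (h : MovesZero P Q r s) {n : ℕ} (hn : zpos P r = zpos Q s + n) :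
    IsRimHook P Q n := by
  refine ⟨h.partition_le, ?_, h.isConnectedSet_skew, noSquare_of_injOn_content h.injOn_content, ?_⟩
  · exact ((Set.nonempty_Ioc.2 h.zpos_lt).mono h.surjOn_content).of_image
  · have := h.ncard_skew
    omega

end MovesZero

end Content

section RimHook

variable {P Q : Partition}

lemma NoSquare.parts_succ_le (h : NoSquare (P.skew Q)) (i : ℕ) :
    P.parts (i + 1) ≤ Q.parts i + 1 := by
  by_contra! hlt
  have hP := P.antitone i.le_succ
  have hQ := Q.antitone i.le_succ
  simp only [Nat.succ_eq_add_one] at hP hQ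
  exact h ⟨i, Q.parts i, by grind [mk_mem_skew_iff]⟩

lemma IsConnectedSet.parts_lt_succ (h : IsConnectedSet (P.skew Q)) {c d : ℕ × ℕ} {i : ℕ}
    (hc : c ∈ P.skew Q) (hd : d ∈ P.skew Q) (hci : c.1 ≤ i) (hid : i < d.1) :
    Q.parts i < P.parts (i + 1) := by
  by_contra! hle
  refine hid.not_ge ?_
  induction h c hc d hd with
  | refl => exact hci
  | @tail a b _ hab ih =>
    obtain ⟨ha, hb, hadj⟩ := hab
    have hai := ih ha
    by_contra! hib
    obtain ⟨a₁, a₂⟩ := a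
    obtain ⟨b₁, b₂⟩ := b
    rw [mk_mem_skew_iff] at ha hb
    simp only [Adj] at hadj hai hib
    obtain ⟨rfl, rfl, rfl⟩ : a₁ = i ∧ b₁ = i + 1 ∧ a₂ = b₂ := by omega
    omega

lemma IsRimHook.exists_movesZero {n : ℕ} (h : IsRimHook P Q n) :
    ∃ r s, MovesZero P Q r s ∧ zpos P r = zpos Q s + n := by
  obtain ⟨hle, ⟨c, hc⟩, hconn, hsq, hcard⟩ := h
  obtain ⟨N, hN⟩ := P.eventually_zero
  have hrow {i : ℕ} (hi : Q.parts i < P.parts i) : (i, Q.parts i) ∈ P.skew Q :=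
    mk_mem_skew_iff.2 ⟨le_rfl, hi⟩
  have hne : {i | Q.parts i < P.parts i}.Nonempty :=
    ⟨c.1, (mk_mem_skew_iff.1 hc).1.trans_lt (mk_mem_skew_iff.1 hc).2⟩
  have hbdd : BddAbove {i | Q.parts i < P.parts i} :=
    ⟨N, fun i hi => not_lt.1 fun hNi => (hi.trans_le (hN i hNi.le).le).not_ge (Nat.zero_le _)⟩
  obtain ⟨r, hr, hrmin⟩ := (OrderBot.bddBelow _).exists_isLeast_of_nonempty hne
  obtain ⟨s, hs, hsmax⟩ := hbdd.exists_isGreatest_of_nonempty hne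
  have hstep (i : ℕ) (hri : r ≤ i) (his : i < s) : P.parts (i + 1) = Q.parts i + 1 :=
    (hsq.parts_succ_le i).antisymm (hconn.parts_lt_succ (hrow hr) (hrow hs) hri his)
  have houtside {i : ℕ} (hi : ¬ Q.parts i < P.parts i) : zpos Q i = zpos P i := by
    rw [zpos, zpos, (hle i).antisymm (not_lt.1 hi)]
  have hmove : MovesZero P Q r s := {
    le := hrmin hs
    zpos_of_lt := fun i hi => houtside fun hi' => (hrmin hi').not_gt hi
    zpos_of_ge_of_lt := fun i hri his => by
      have := hstep i hri his
      simp only [zpos]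
      omega
    zpos_of_gt := fun i hi => houtside fun hi' => (hsmax hi').not_gt hi
    zpos_lt := by
      refine lt_of_lt_of_le ?_ ((zpos_strictAnti P).antitone (hrmin hs))
      have : Q.parts s < P.parts s := hs
      simp only [zpos]
      omega }
  have := hmove.ncard_skew
  exact ⟨r, s, hmove, by omega⟩

theorem isRimHook_iff_zeroSet {n : ℕ} :
    IsRimHook P Q n ↔
      ∃ x ∈ zeroSet P, x - n ∉ zeroSet P ∧ zeroSet Q = insert (x - n) (zeroSet P \ {x}) := by
  constructor
  · intro h
    obtain ⟨r, s, hmove, hn⟩ := h.exists_movesZero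
    have hs : zpos P r - n = zpos Q s := by omega
    refine ⟨zpos P r, zpos_mem_zeroSet P r, ?_⟩
    rw [hs]
    exact ⟨hmove.zpos_notMem, hmove.zeroSet_eq⟩
  · rintro ⟨_, ⟨r, rfl⟩, hy, hQ⟩
    have hn : n ≠ 0 := by
      rintro rfl
      exact hy (by simpa using zpos_mem_zeroSet P r)
    obtain ⟨Q', s, hmove, hs⟩ := exists_movesZero hy (show _ < zpos P r by omega)
    obtain rfl : Q' = Q := zeroSet_injective (by rw [hmove.zeroSet_eq, hQ, hs])
    exact hmove.isRimHook (by omega)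

lemma exists_zeroSet_eq_insert {x y : ℤ} (hx : x ∈ zeroSet P) (hy : y ∉ zeroSet P) (hyx : y < x) :
    ∃ Q, zeroSet Q = insert y (zeroSet P \ {x}) := by
  obtain ⟨r, rfl⟩ := hx
  obtain ⟨Q, s, hmove, rfl⟩ := exists_movesZero hy hyx
  exact ⟨Q, hmove.zeroSet_eq⟩

theorem IsRimHook.exists_split {a b : ℕ} (ha : 0 < a) (hb : 0 < b) (h : IsRimHook P Q (a + b)) :
    ∃ R, (IsRimHook P R a ∧ IsRimHook R Q b) ∨ (IsRimHook P R b ∧ IsRimHook R Q a) := by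
  simp only [isRimHook_iff_zeroSet] at h ⊢
  obtain ⟨x, hx, hy, hQ⟩ := h
  rw [Nat.cast_add, ← sub_sub] at hy hQ
  by_cases hm : x - a ∈ zeroSet P
  · obtain ⟨R, hR⟩ := exists_zeroSet_eq_insert hm hy (by omega)
    have hxR : x ∈ zeroSet R := by grind
    have hmR : x - a ∉ zeroSet R := by grind
    have hRQ : zeroSet Q = insert (x - a) (zeroSet R \ {x}) := by grind
    exact ⟨R, .inr ⟨⟨x - a, hm, hy, hR⟩, x, hxR, hmR, hRQ⟩⟩
  · obtain ⟨R, hR⟩ := exists_zeroSet_eq_insert hx hm (by omega)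
    have hmR : x - a ∈ zeroSet R := by grind
    have hyR : x - a - b ∉ zeroSet R := by grind
    have hRQ : zeroSet Q = insert (x - a - b) (zeroSet R \ {x - a}) := by grind
    exact ⟨R, .inl ⟨⟨x, hx, hm, hR⟩, x - a, hmR, hyR, hRQ⟩⟩

theorem IsRimHook.exists_relSeries {k t : ℕ} (hk : 0 < k) (ht : 1 ≤ t)
    (h : IsRimHook P Q (k * t)) :
    ∃ c : RelSeries {e : Partition × Partition | IsRimHook e.2 e.1 k},
      c.length = t ∧ c.head = Q ∧ c.last = P := by
  induction t, ht using Nat.le_induction generalizing P Q with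
  | base => exact ⟨(RelSeries.singleton _ Q).snoc P (by simpa using h), rfl, by simp, by simp⟩
  | succ t ht ih =>
    rw [mul_add_one, add_comm] at h
    obtain ⟨R, ⟨hPR, hRQ⟩ | ⟨hPR, hRQ⟩⟩ := h.exists_split hk (Nat.mul_pos hk ht)
    · obtain ⟨c, rfl, rfl, rfl⟩ := ih hRQ
      exact ⟨c.snoc P hPR, by simp, by simp, by simp⟩
    · obtain ⟨c, rfl, rfl, rfl⟩ := ih hPR
      exact ⟨c.cons Q hRQ, by simp, by simp, by simp⟩

end RimHook

/-- Garsia–Stanley: if `λ/ν` is a rim hook of length `k·t`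
(`k, t ≥ 1`), then there is a skew rim hook tableau of that shape consisting of
`t` rim hooks of length `k` each: a chain `ν = ν⁰ ⊆ ν¹ ⊆ ⋯ ⊆ νᵗ = λ` with each
`νⁱ/νⁱ⁻¹` a rim hook of length `k`. -/
theorem rim_hook_splits_into_k_hooks (k t : ℕ) (hk : 1 ≤ k) (ht : 1 ≤ t)
    (lam nu : Partition) (h : IsRimHook lam nu (k * t)) :
    ∃ c : Fin (t + 1) → Partition, c 0 = nu ∧ c (Fin.last t) = lam ∧
      ∀ j : Fin t, IsRimHook (c j.succ) (c j.castSucc) k := by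
  obtain ⟨c, rfl, hhead, hlast⟩ := h.exists_relSeries hk ht
  exact ⟨c, hhead, hlast, c.step⟩

end RimHookPaper
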